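/- arXiv:1707.06687 — 2 statements merged into one kernel-verified Lean document; each statement's English description precedes it below -/
import Mathlib

section
/- Let K be a field of characteristic zero, α, β, γ ∈ K with β ≠ 0 and γ ≠ 0, and suppose the roots λ, μ of t² − αt − β lie in K. Then the down-up algebra A = A(α,β,γ) has a non-trivial stably free right ideal, i.e. a right ideal that is stably free but not free as a right A-module. -/
noncomputable section

/-- Defining relations of the down-up algebra `A(α,β,γ)`:
`D = ι 0`, `U = ι 1`, relations `DU² = αUDU + βU²D + γU` and `D²U = αDUD + βUD² + γD`. -/
inductive DownUpRel (K : Type) [Field K] (a b g : K) :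
    FreeAlgebra K (Fin 2) → FreeAlgebra K (Fin 2) → Prop
  | rel1 : DownUpRel K a b g
      (FreeAlgebra.ι K (0 : Fin 2) * FreeAlgebra.ι K (1 : Fin 2) * FreeAlgebra.ι K (1 : Fin 2))
      (a • (FreeAlgebra.ι K (1 : Fin 2) * FreeAlgebra.ι K (0 : Fin 2) * FreeAlgebra.ι K (1 : Fin 2)) +
       b • (FreeAlgebra.ι K (1 : Fin 2) * FreeAlgebra.ι K (1 : Fin 2) * FreeAlgebra.ι K (0 : Fin 2)) +
       g • FreeAlgebra.ι K (1 : Fin 2))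
  | rel2 : DownUpRel K a b g
      (FreeAlgebra.ι K (0 : Fin 2) * FreeAlgebra.ι K (0 : Fin 2) * FreeAlgebra.ι K (1 : Fin 2))
      (a • (FreeAlgebra.ι K (0 : Fin 2) * FreeAlgebra.ι K (1 : Fin 2) * FreeAlgebra.ι K (0 : Fin 2)) +
       b • (FreeAlgebra.ι K (1 : Fin 2) * FreeAlgebra.ι K (0 : Fin 2) * FreeAlgebra.ι K (0 : Fin 2)) +
       g • FreeAlgebra.ι K (0 : Fin 2))

/-- The down-up algebra `A(α,β,γ)`. -/
abbrev DownUp (K : Type) [Field K] (a b g : K) := RingQuot (DownUpRel K a b g)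

/-- The generator `D` of `A(α,β,γ)`. -/
def DownUp.D (K : Type) [Field K] (a b g : K) : DownUp K a b g :=
  RingQuot.mkAlgHom K (DownUpRel K a b g) (FreeAlgebra.ι K (0 : Fin 2))

/-- The generator `U` of `A(α,β,γ)`. -/
def DownUp.U (K : Type) [Field K] (a b g : K) : DownUp K a b g :=
  RingQuot.mkAlgHom K (DownUpRel K a b g) (FreeAlgebra.ι K (1 : Fin 2))

/-- A right `A`-module `P` (realized as a left `Aᵐᵒᵖ`-module) is stably free if
`P ⊕ Aⁿ ≅ Aᵐ` as right `A`-modules for some naturals `n m`. -/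
def IsStablyFreeRight (A : Type) [Ring A] (P : Type) [AddCommGroup P] [Module Aᵐᵒᵖ P] : Prop :=
  ∃ n m : ℕ, Nonempty ((P × (Fin n → A)) ≃ₗ[Aᵐᵒᵖ] (Fin m → A))

open SkewMonoidAlgebra in
theorem sma_factor_single {B G : Type} [CommRing B] [IsDomain B] [Group G] [TwoUniqueProds G]
    [MulSemiringAction G B] (t h : SkewMonoidAlgebra B G) (g : G) (b : B) (hb : b ≠ 0)
    (e : t * h = single g b) : ∃ n c, t = single n c := by
  classical
  have key : ∀ p : G × G, p ∈ t.support ×ˢ h.support →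
      UniqueMul t.support h.support p.1 p.2 → p.1 * p.2 = g := by
    intro p hp hu
    rw [Finset.mem_product] at hp
    have h1 : (t * h).coeff (p.1 * p.2) = t.coeff p.1 * p.1 • h.coeff p.2 := by
      rw [coeff_mul, sum_def', Finset.sum_eq_single p.1]
      · rw [sum_def', Finset.sum_eq_single p.2]
        · simp
        · intro y hy hne
          rw [if_neg]
          intro h2
          exact hne (hu hp.1 hy h2).2
        · intro h2; exact absurd hp.2 h2
      · intro x hx hne
        rw [sum_def']
        apply Finset.sum_eq_zero
        intro y hy
        rw [if_neg]
        intro h2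
        exact hne (hu hx hy h2).1
      · intro h2; exact absurd hp.1 h2
    have h2 : (t * h).coeff (p.1 * p.2) ≠ 0 := by
      rw [h1]
      apply mul_ne_zero (mem_support_iff.1 hp.1)
      rw [smul_ne_zero_iff_ne]
      exact mem_support_iff.1 hp.2
    rw [e, coeff_single_apply] at h2
    by_contra h3
    rw [if_neg (fun h4 => h3 h4.symm)] at h2
    exact h2 rfl
  have hne : t * h ≠ 0 := by
    rw [e]; intro h1; exact hb (single_eq_zero.1 h1)
  have ht : t.support.Nonempty := by
    rw [Finset.nonempty_iff_ne_empty]; intro h1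
    rw [support_eq_empty.1 h1, zero_mul] at hne; exact hne rfl
  have hh : h.support.Nonempty := by
    rw [Finset.nonempty_iff_ne_empty]; intro h1
    rw [support_eq_empty.1 h1, mul_zero] at hne; exact hne rfl
  have hc : t.support.card = 1 := by
    by_contra h1
    have h2 := ht.card_pos
    have h3 := hh.card_pos
    have h4 : 1 < t.support.card * h.support.card := by
      have : 2 ≤ t.support.card := by omega
      nlinarith
    obtain ⟨p, hp, q, hq, hpq, u1, u2⟩ := TwoUniqueProds.uniqueMul_of_one_lt_card h4
    have := key p hp u1
    have h6 := key q hq u2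
    rw [Finset.mem_product] at hq
    have := u1 hq.1 hq.2 (by rw [h6, this])
    exact hpq (Prod.ext this.1.symm this.2.symm)
  obtain ⟨n, hn⟩ := Finset.card_eq_one.1 hc
  refine ⟨n, t.coeff n, ?_⟩
  ext m
  rw [coeff_single_apply]
  split_ifs with hm
  · rw [hm]
  · rw [← notMem_support_iff, hn, Finset.mem_singleton]
    exact fun h => hm h.symm

theorem ibn_of_ringHom {R K : Type} [Ring R] [Field K] (φ : R →+* K) : InvariantBasisNumber R := by
  constructor
  intro n m e
  have h1 := LinearMap.toMatrixRight'_comp (e : (Fin n → R) →ₗ[R] Fin m → R) (e.symm : (Fin m → R) →ₗ[R] Fin n → R)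
  have h2 := LinearMap.toMatrixRight'_comp (e.symm : (Fin m → R) →ₗ[R] Fin n → R) (e : (Fin n → R) →ₗ[R] Fin m → R)
  simp only [LinearEquiv.comp_coe, LinearEquiv.self_trans_symm, LinearEquiv.symm_trans_self, LinearEquiv.refl_toLinearMap, LinearMap.toMatrixRight'_id] at h1 h2
  have h1' := congrArg (fun M => M.map φ) h1
  have h2' := congrArg (fun M => M.map φ) h2
  simp only [Matrix.map_mul, Matrix.map_one _ φ.map_zero φ.map_one] at h1' h2'
  have := eq_of_fin_equiv K (Matrix.toLinearEquivRight'OfInv h1'.symm h2'.symm)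
  omega

/-- stably free part -/
theorem stably_free_equiv {A : Type} [Ring A] (U q u v : A) (hreg : ∀ a, U * a = 0 → a = 0)
    (huv : U * u + q * v = 1) (J : Submodule Aᵐᵒᵖ A) (hJ : ∀ f, f ∈ J ↔ ∃ a, q * f = U * a) :
    Nonempty ((A × A) ≃ₗ[Aᵐᵒᵖ] (J × A)) := by
  have hqv : q * v = 1 - U * u := by rw [← huv]; abel
  have hm : ∀ p : A × A, p.2 - v * (U * p.1 + q * p.2) ∈ J := by
    intro p
    rw [hJ]
    refine ⟨u * (U * p.1 + q * p.2) - p.1, ?_⟩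
    rw [mul_sub, ← mul_assoc q v, hqv]
    noncomm_ring
  let Φ : (A × A) →ₗ[Aᵐᵒᵖ] (J × A) :=
    { toFun := fun p => (⟨p.2 - v * (U * p.1 + q * p.2), hm p⟩, U * p.1 + q * p.2)
      map_add' := by
        intro x y
        ext
        · simp; noncomm_ring
        · simp; noncomm_ring
      map_smul' := by
        intro r x
        ext
        · simp [MulOpposite.smul_eq_mul_unop]; noncomm_ring
        · simp [MulOpposite.smul_eq_mul_unop]; noncomm_ring }
  refine ⟨LinearEquiv.ofBijective Φ ⟨?_, ?_⟩⟩
  · rw [injective_iff_map_eq_zero]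
    rintro ⟨a, b⟩ h
    have h1 : U * a + q * b = 0 := congrArg Prod.snd h
    have h2 : b - v * (U * a + q * b) = 0 := congrArg (fun z => (z.1 : A)) h
    rw [h1, mul_zero, sub_zero] at h2
    rw [h2, mul_zero, add_zero] at h1
    rw [h2, hreg a h1]; rfl
  · rintro ⟨⟨j, hj⟩, e⟩
    obtain ⟨k, hk⟩ := (hJ j).1 hj
    have h1 : U * (u * e - k) + q * (j + v * e) = e := by
      rw [mul_add, ← mul_assoc q v, hqv, hk]; noncomm_ring
    refine ⟨(u * e - k, j + v * e), ?_⟩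
    ext
    · change (j + v * e) - v * (U * (u * e - k) + q * (j + v * e)) = j
      rw [h1]; abel
    · exact h1

def opSelfEquiv (A : Type) [Ring A] : Aᵐᵒᵖ ≃ₗ[Aᵐᵒᵖ] A :=
  { (MulOpposite.opAddEquiv (α := A)).symm with
    map_smul' := by intro r x; simp [MulOpposite.smul_eq_mul_unop] }

theorem generator_of_free {A K : Type} [Ring A] [Field K] (aug : A →+* K) (J : Submodule Aᵐᵒᵖ A)
    (e : (A × A) ≃ₗ[Aᵐᵒᵖ] (J × A)) (hF : Module.Free Aᵐᵒᵖ J) :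
    ∃ t ∈ J, ∀ f ∈ J, ∃ h, f = t * h := by
  have : InvariantBasisNumber Aᵐᵒᵖ :=
    ibn_of_ringHom (aug.fromOpposite (fun x y => Commute.all _ _))
  let bJ := Module.Free.chooseBasis Aᵐᵒᵖ J
  let bA : Module.Basis Unit Aᵐᵒᵖ A := (Module.Basis.singleton Unit Aᵐᵒᵖ).map (opSelfEquiv A)
  have h := mk_eq_mk_of_basis' ((bA.prod bA).map e) (bJ.prod bA)
  simp only [Cardinal.mk_sum, Cardinal.mk_fintype, Fintype.card_sum, Nat.cast_add, Fintype.card_unit, Nat.cast_one, Cardinal.lift_id] at h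
  have h1 : Cardinal.mk (Module.Free.ChooseBasisIndex Aᵐᵒᵖ J) = 1 :=
    (Cardinal.add_one_inj.1 h).symm
  rw [Cardinal.eq_one_iff_unique] at h1
  obtain ⟨_, ⟨i⟩⟩ := h1
  refine ⟨bJ i, (bJ i).2, fun f hf => ⟨(bJ.repr ⟨f, hf⟩ i).unop, ?_⟩⟩
  have h2 := bJ.linearCombination_repr ⟨f, hf⟩
  letI : Unique (Module.Free.ChooseBasisIndex Aᵐᵒᵖ J) := uniqueOfSubsingleton i
  rw [Finsupp.linearCombination_unique] at h2
  have h3 := congrArg Subtype.val h2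
  rw [← MulOpposite.smul_eq_mul_unop]
  exact h3.symm

section alg
variable {K A : Type} [Field K] [Ring A] [Algebra K A] (α β γ lam μ : K) (D U : A)

/-- the element `w = DU - λUD` -/
def wEl (lam : K) (D U : A) : A := D * U - lam • (U * D)

variable {α β γ lam μ D U}

theorem DU_eq : D * U = lam • (U * D) + wEl lam D U := by simp [wEl]

theorem D_w (hsum : lam + μ = α) (hprod : lam * μ = -β)
    (r2 : D * D * U = α • (D * U * D) + β • (U * D * D) + γ • D) :
    D * wEl lam D U = μ • (wEl lam D U * D) + γ • D := by
  have hb : β = -(lam * μ) := by rw [hprod, neg_neg]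
  subst hsum; subst hb
  simp only [wEl, mul_sub, sub_mul, mul_smul_comm, smul_mul_assoc, ← mul_assoc]
  rw [r2]
  module

theorem w_U (hsum : lam + μ = α) (hprod : lam * μ = -β)
    (r1 : D * U * U = α • (U * D * U) + β • (U * U * D) + γ • U) :
    wEl lam D U * U = μ • (U * wEl lam D U) + γ • U := by
  have hb : β = -(lam * μ) := by rw [hprod, neg_neg]
  subst hsum; subst hb
  simp only [wEl, mul_sub, sub_mul, mul_smul_comm, smul_mul_assoc, ← mul_assoc]
  rw [r1]
  module

/-- the special element of `J` -/
def fEl (γ lam μ : K) (D U : A) : A :=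
  -(wEl lam D U * (wEl lam D U - γ • 1)) + U * (wEl lam D U - γ • 1)
    + μ • (U * (μ • wEl lam D U + γ • 1) * D)

theorem f_mem (hsum : lam + μ = α) (hprod : lam * μ = -β)
    (r2 : D * D * U = α • (D * U * D) + β • (U * D * D) + γ • D) :
    ∃ a, (D + 1) * fEl γ lam μ D U = U * a := by
  have h1 := D_w hsum hprod r2
  have h2 : D * U = lam • (U * D) + wEl lam D U := DU_eq
  refine ⟨lam • (D * (wEl lam D U - γ • 1)) + (μ * lam) • (D * (μ • wEl lam D U + γ • 1) * D)
    + (wEl lam D U - γ • 1) + μ • ((μ • wEl lam D U + γ • 1) * D), ?_⟩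
  unfold fEl
  generalize wEl lam D U = w at *
  have h3 : ∀ y, D * (w * y) = μ • (w * (D * y)) + γ • (D * y) := by
    intro y; rw [← mul_assoc, h1, add_mul, smul_mul_assoc, smul_mul_assoc, mul_assoc]
  have h4 : ∀ y, D * (U * y) = lam • (U * (D * y)) + w * y := by
    intro y; rw [← mul_assoc, h2, add_mul, smul_mul_assoc, mul_assoc]
  simp only [add_mul, mul_add, mul_neg, mul_sub, sub_mul, one_mul, mul_one, mul_smul_comm,
    smul_mul_assoc, mul_assoc, smul_add, smul_sub, h3, h1, h4, h2]
  module

theorem exists_uv (hγ : γ ≠ 0) (hsum : lam + μ = α) (hprod : lam * μ = -β)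
    (r2 : D * D * U = α • (D * U * D) + β • (U * D * D) + γ • D) :
    ∃ u v, U * u + (D + 1) * v = 1 := by
  have h1 := D_w hsum hprod r2
  have h2 : D * U = lam • (U * D) + wEl lam D U := DU_eq
  generalize wEl lam D U = w at *
  have hw : w = (D + 1) * U - U * (lam • D + 1) := by
    rw [add_mul, h2, mul_add, mul_smul_comm]; simp
  have h3 : γ • D = (D + 1) * w - w * (μ • D + 1) := by
    rw [add_mul, h1, mul_add, mul_smul_comm]; simp
  have h4 : (1 : A) = (D + 1) * 1 - γ⁻¹ • (γ • D) := by
    rw [smul_smul, inv_mul_cancel₀ hγ]; simp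
  refine ⟨-(γ⁻¹ • ((lam • D + 1) * (μ • D + 1))), 1 - γ⁻¹ • (w - U * (μ • D + 1)), ?_⟩
  have h5 : w * (μ • D + 1) = (D + 1) * (U * (μ • D + 1)) - U * ((lam • D + 1) * (μ • D + 1)) := by
    conv_lhs => rw [hw]
    rw [sub_mul, mul_assoc, mul_assoc]
  refine Eq.trans ?_ h4.symm
  rw [h3, h5]
  simp only [mul_sub, mul_neg, mul_smul_comm, smul_sub]
  abel

end alg

section model
open SkewMonoidAlgebra
variable {K B : Type} [Field K] [CommRing B] [Algebra K B]


theorem model_rel1 [MulSemiringAction (Multiplicative ℤ) B] [SMulCommClass (Multiplicative ℤ) K B] (g : Multiplicative ℤ) (x : B) (α β γ : K)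
    (hx : g • g • x = α • g • x + β • x + γ • (1 : B)) (D U : SkewMonoidAlgebra B (Multiplicative ℤ))
    (hD : D = single g 1) (hU : U = single g⁻¹ x) :
    D * U * U = α • (U * D * U) + β • (U * U * D) + γ • U := by
  subst hD hU
  have h := congrArg (fun y => g⁻¹ • y) hx
  simp only [inv_smul_smul, smul_add, smul_comm g⁻¹ α, smul_comm g⁻¹ β, smul_comm g⁻¹ γ, smul_one] at h
  simp only [single_mul_single, ← single_add, smul_single]
  simp only [mul_inv_cancel, inv_mul_cancel, one_mul, one_smul, mul_one, smul_one, inv_mul_cancel_right]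
  rw [← single_add, ← single_add, h]
  congr 1
  simp only [add_mul, smul_mul_assoc, one_mul]
  rw [mul_comm x (g⁻¹ • x)]

theorem model_rel2 [MulSemiringAction (Multiplicative ℤ) B] [SMulCommClass (Multiplicative ℤ) K B] (g : Multiplicative ℤ) (x : B) (α β γ : K)
    (hx : g • g • x = α • g • x + β • x + γ • (1 : B)) (D U : SkewMonoidAlgebra B (Multiplicative ℤ))
    (hD : D = single g 1) (hU : U = single g⁻¹ x) :
    D * D * U = α • (D * U * D) + β • (U * D * D) + γ • D := by
  subst hD hU
  simp only [single_mul_single, smul_single]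
  simp only [mul_inv_cancel, inv_mul_cancel, one_mul, one_smul, mul_one, smul_one, mul_inv_cancel_right]
  rw [← single_add, ← single_add, mul_smul, hx]

theorem model_no_gen [IsDomain B] [MulSemiringAction (Multiplicative ℤ) B] [SMulCommClass (Multiplicative ℤ) K B] (g : Multiplicative ℤ) (hg : g ≠ 1) (x : B)
    (hx0 : x ≠ 0)
    (γ lam μ : K) (D U : SkewMonoidAlgebra B (Multiplicative ℤ))
    (hD : D = single g 1) (hU : U = single g⁻¹ x)
    (hnd : ¬ x ∣ (g • x - lam • x) * (g • x - lam • x - γ • 1))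
    (t a h h' : SkewMonoidAlgebra B (Multiplicative ℤ)) (h1 : (D + 1) * t = U * a) (h2 : U * U = t * h)
    (h3 : fEl γ lam μ D U = t * h') : False := by
  have hUU : U * U = single (g⁻¹ * g⁻¹) (x * g⁻¹ • x) := by rw [hU, single_mul_single]
  obtain ⟨n, c, rfl⟩ := sma_factor_single t h (g⁻¹ * g⁻¹) (x * g⁻¹ • x)
    (mul_ne_zero hx0 ((smul_ne_zero_iff_ne _).2 hx0)) (by rw [← h2, hUU])
  have hc : x ∣ c := by
    have := congrArg (fun y => y.coeff n) h1
    simp only [hD, hU, add_mul, one_mul, coeff_add, Finsupp.add_apply, coeff_single_mul] at this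
    rw [coeff_single_apply, coeff_single_apply, if_neg, if_pos rfl, smul_zero, zero_add] at this
    · exact ⟨_, this⟩
    · intro h; apply hg; simpa using h.symm
  have hf : x ∣ (fEl γ lam μ D U).coeff 1 := by
    rw [h3, coeff_single_mul]
    exact Dvd.dvd.mul_right hc _
  apply hnd
  have hw : wEl lam D U = single 1 (g • x - lam • x) := by
    simp only [wEl, hD, hU, single_mul_single, smul_single, mul_inv_cancel, inv_mul_cancel, one_mul, mul_one, smul_one]
    rw [sub_eq_add_neg, ← single_neg, ← single_add, ← sub_eq_add_neg]
  have hs : ∀ k : K, (k • (1 : SkewMonoidAlgebra B (Multiplicative ℤ))) = single 1 (k • 1) := by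
    intro k; rw [one_def, smul_single]
  unfold fEl at hf
  simp only [hw] at hf
  simp only [hs, hU, hD, sub_eq_add_neg, ← single_neg, ← single_add, smul_single, single_mul_single, coeff_add, Finsupp.add_apply, coeff_single_apply] at hf
  have hg' : g⁻¹ ≠ 1 := by simpa using hg
  simp only [mul_one, one_mul, inv_mul_cancel, if_true, hg', if_false, one_smul, add_zero] at hf
  have h4 := (dvd_add_left (a := x) (c := μ • (x * (g⁻¹ • (μ • (g • x + -(lam • x)) + γ • 1)) * g⁻¹ • 1)) ?_).1 hf
  · rw [dvd_neg] at h4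
    simpa only [sub_eq_add_neg] using h4
  · rw [← smul_mul_assoc, ← mul_smul_comm, mul_assoc]
    exact Dvd.intro _ rfl
end model
section reg
variable {K Q : Type} [Field K] [CommRing Q] [Algebra K Q]

/-- coefficients in `D U^i = λ^i U^i D + U^(i-1) c_i` -/
def cSeq (α β γ : K) (w : Q) : ℕ → Q
  | 0 => 0
  | 1 => w
  | (n + 2) => α • cSeq α β γ w (n + 1) + β • cSeq α β γ w n + γ • 1

theorem cSeq_sigma {α β γ lam μ : K} (hsum : lam + μ = α) (hprod : lam * μ = -β)
    (σ : Q →ₐ[K] Q) (w : Q) (hw : σ w = μ • w + γ • 1) (i : ℕ) :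
    σ (cSeq α β γ w (i + 1) - lam • cSeq α β γ w i)
      = cSeq α β γ w (i + 2) - lam • cSeq α β γ w (i + 1) := by
  have hb : β = -(lam * μ) := by rw [hprod, neg_neg]
  subst hsum; subst hb
  have step : ∀ i, cSeq (lam + μ) (-(lam * μ)) γ w (i + 2) - lam • cSeq (lam + μ) (-(lam * μ)) γ w (i + 1)
      = μ • (cSeq (lam + μ) (-(lam * μ)) γ w (i + 1) - lam • cSeq (lam + μ) (-(lam * μ)) γ w i) + γ • 1 := by
    intro i
    rw [cSeq]; module
  induction i with
  | zero => rw [step]; simp [cSeq, hw]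
  | succ n ih =>
    conv_lhs => rw [step, map_add, map_smul, ih, map_smul, map_one]
    rw [step (n + 1)]

/-- the operator `U` -/
def opU (K Q : Type) [Field K] [CommRing Q] [Algebra K Q] : Module.End K (ℕ →₀ Q) :=
  Finsupp.lsum K fun i => Finsupp.lsingle (i + 1)

/-- the operator `D` -/
def opD (α β γ lam : K) (σ : Q →ₐ[K] Q) (w d : Q) : Module.End K (ℕ →₀ Q) :=
  Finsupp.lsum K fun i =>
    (Finsupp.lsingle i).comp (lam ^ i • (LinearMap.mulLeft K d).comp σ.toLinearMap)
    + (Finsupp.lsingle (i - 1)).comp (LinearMap.mulLeft K (cSeq α β γ w i))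

theorem opU_single (i : ℕ) (q : Q) : opU K Q (Finsupp.single i q) = Finsupp.single (i + 1) q := by
  simp [opU]

theorem opD_single (α β γ lam : K) (σ : Q →ₐ[K] Q) (w d : Q) (i : ℕ) (q : Q) :
    opD α β γ lam σ w d (Finsupp.single i q) =
      Finsupp.single i (lam ^ i • (d * σ q)) + Finsupp.single (i - 1) (cSeq α β γ w i * q) := by
  simp only [opD, Finsupp.lsum_single, LinearMap.add_apply, LinearMap.comp_apply, LinearMap.smul_apply,
    LinearMap.mulLeft_apply, Finsupp.lsingle_apply, AlgHom.toLinearMap_apply]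

theorem opU_apply (v : ℕ →₀ Q) (i : ℕ) : (opU K Q v) (i + 1) = v i := by
  induction v using Finsupp.induction_linear with
  | zero => simp
  | add f g hf hg => rw [LinearMap.map_add, Finsupp.add_apply, Finsupp.add_apply, hf, hg]
  | single j q => rw [opU_single]; simp [Finsupp.single_apply]

theorem opU_inj (v : ℕ →₀ Q) (h : opU K Q v = 0) : v = 0 := by
  ext i
  rw [← opU_apply (K := K), h]; rfl

theorem op_rel1 {α β γ lam μ : K} (hsum : lam + μ = α) (hprod : lam * μ = -β)
    (σ : Q →ₐ[K] Q) (w d : Q) :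
    opD α β γ lam σ w d * opU K Q * opU K Q
      = α • (opU K Q * opD α β γ lam σ w d * opU K Q)
       + β • (opU K Q * opU K Q * opD α β γ lam σ w d) + γ • opU K Q := by
  have hb : β = -(lam * μ) := by rw [hprod, neg_neg]
  ext i q : 2
  simp only [LinearMap.comp_apply, Finsupp.lsingle_apply, Module.End.mul_apply, LinearMap.add_apply,
    LinearMap.smul_apply, opU_single, opD_single, map_add, Nat.add_sub_cancel]
  have h0 : Finsupp.single (i - 1 + 1 + 1) (cSeq α β γ w i * q)
      = Finsupp.single (i + 1) (cSeq α β γ w i * q) := by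
    cases i with
    | zero => simp [cSeq]
    | succ n => rfl
  rw [h0]
  have h1 : cSeq α β γ w (i + 1 + 1) = α • cSeq α β γ w (i + 1) + β • cSeq α β γ w i + γ • 1 := rfl
  have h2 : i + 1 + 1 - 1 = i + 1 := rfl
  simp only [h1, h2, Finsupp.smul_single, smul_add, ← add_assoc, add_mul, Finsupp.single_add, smul_mul_assoc, one_mul]
  have h3 : lam ^ (i + 1 + 1) • (d * σ q) = α • lam ^ (i + 1) • (d * σ q) + β • lam ^ i • (d * σ q) := by
    subst hb; subst hsum; module
  rw [h3, Finsupp.single_add]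
  abel

theorem collect {α β γ : K} {a b c : ℕ} {x1 x2 x3 x4 y1 y2 y3 y4 z1 z2 z3 z4 u v : Q}
    (e1 : x1 = α • y1 + β • z1) (e2 : x2 + x3 = α • (y2 + y3) + β • (z2 + z3) + γ • u)
    (e3 : x4 = α • y4 + β • z4 + γ • v) :
    (Finsupp.single a x1 + Finsupp.single b x2) + (Finsupp.single b x3 + Finsupp.single c x4)
      = α • ((Finsupp.single a y1 + Finsupp.single b y2) + (Finsupp.single b y3 + Finsupp.single c y4))
      + β • ((Finsupp.single a z1 + Finsupp.single b z2) + (Finsupp.single b z3 + Finsupp.single c z4))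
      + γ • (Finsupp.single b u + Finsupp.single c v) := by
  have h2 := congrArg (Finsupp.single b) e2
  simp only [Finsupp.single_add, ← Finsupp.smul_single] at h2
  have h3 : x3 = α • (y2 + y3) + β • (z2 + z3) + γ • u - x2 := by rw [← e2]; abel
  rw [e1, h3, e3]
  simp only [Finsupp.single_add, Finsupp.single_sub, ← Finsupp.smul_single]
  module

theorem op_rel2 {α β γ lam μ : K} (hsum : lam + μ = α) (hprod : lam * μ = -β)
    (σ : Q →ₐ[K] Q) (w d : Q) (hw : σ w = μ • w + γ • 1) (hd : σ d = d) :
    opD α β γ lam σ w d * opD α β γ lam σ w d * opU K Q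
      = α • (opD α β γ lam σ w d * opU K Q * opD α β γ lam σ w d)
       + β • (opU K Q * opD α β γ lam σ w d * opD α β γ lam σ w d) + γ • opD α β γ lam σ w d := by
  have hb : β = -(lam * μ) := by rw [hprod, neg_neg]
  ext i q : 2
  simp only [LinearMap.comp_apply, Finsupp.lsingle_apply, Module.End.mul_apply, LinearMap.add_apply,
    LinearMap.smul_apply, opU_single, opD_single, map_add, Nat.add_sub_cancel, map_mul, map_smul, hd]
  have c0 : cSeq α β γ w 0 = 0 := rfl
  have h1 : ∀ n, cSeq α β γ w (n + 2) = α • cSeq α β γ w (n + 1) + β • cSeq α β γ w n + γ • 1 :=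
    fun n => rfl
  have hs := cSeq_sigma hsum hprod σ w hw i
  rw [map_sub, map_smul, h1, sub_eq_iff_eq_add] at hs
  have e1 : lam ^ (i + 1) • (d * lam ^ (i + 1) • (d * σ (σ q))) =
      α • lam ^ (i + 1) • (d * lam ^ i • (d * σ (σ q))) + β • lam ^ i • (d * lam ^ i • (d * σ (σ q))) := by
    subst hb; subst hsum; simp only [mul_smul_comm]; module
  cases i with
  | zero =>
    simp only [c0, map_zero, smul_zero, zero_mul, mul_zero, add_zero, Finsupp.single_zero, Nat.zero_add, Nat.zero_sub, pow_zero, pow_one, one_smul] at hs e1 ⊢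
    have := collect (a := 1) (b := 0) (c := 0) (x2 := cSeq α β γ w 1 * lam • (d * σ q))
      (x3 := d * (σ (cSeq α β γ w 1) * σ q)) (x4 := 0) (y2 := cSeq α β γ w 1 * (d * σ q)) (y3 := 0)
      (y4 := 0) (z2 := 0) (z3 := 0) (z4 := 0) (v := 0) (γ := γ) (u := d * σ q) e1
      (by
        rw [hs]
        simp only [Algebra.smul_def]
        ring) (by simp)
    simpa only [Finsupp.single_zero, add_zero] using this
  | succ n =>
    have h0 : ∀ y, Finsupp.single (n - 1 + 1) (cSeq α β γ w n * y)
      = Finsupp.single n (cSeq α β γ w n * y) := by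
      intro y
      cases n with
      | zero => simp [cSeq]
      | succ n => rfl
    have h2 : n + 1 - 1 = n := rfl
    simp only [h2, h0]
    apply collect e1
    · rw [hs]
      subst hb; subst hsum
      simp only [Algebra.smul_def, map_add, map_neg, map_mul, map_pow]
      ring
    · rw [h1]
      simp only [Algebra.smul_def]
      ring
end reg

section psi
open Polynomial
variable {K A : Type} [Field K] [Ring A] [Algebra K A]

/-- the twist -/
def sg (μ γ : K) : K[X] →ₐ[K] K[X] := aeval (C μ * X + C γ)

/-- the twist extended -/
def sgQ (μ γ : K) : K[X][X] →ₐ[K] K[X][X] := mapAlgHom (sg μ γ)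

/-- `C p * X^k ↦ p(w) D^k` -/
def psi0 (w D : A) : K[X][X] →ₗ[K] A :=
  Polynomial.lsum fun k => (LinearMap.mulRight K (D ^ k)).comp (aeval w).toLinearMap

theorem psi0_monomial (w D : A) (k : ℕ) (p : K[X]) :
    psi0 w D (monomial k p) = aeval w p * D ^ k := by
  simp [psi0, Polynomial.lsum_apply, Polynomial.sum_monomial_index]

theorem D_aeval {μ γ : K} {w D : A} (h : D * w = μ • (w * D) + γ • D) (p : K[X]) :
    D * aeval w p = aeval w (sg μ γ p) * D := by
  induction p using Polynomial.induction_on' with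
  | add p q hp hq => simp only [map_add, mul_add, add_mul, hp, hq]
  | monomial n a =>
    have h1 : ∀ n, D * w ^ n = aeval w ((sg μ γ X) ^ n) * D := by
      intro n
      induction n with
      | zero => simp
      | succ n ih =>
        rw [pow_succ, ← mul_assoc, ih, mul_assoc, h, pow_succ, map_mul, mul_assoc]
        congr 1
        simp [sg, add_mul, Algebra.smul_def, mul_assoc]
    rw [← C_mul_X_pow_eq_monomial, map_mul, map_mul, map_pow, map_pow, map_mul, mul_assoc, ← h1]
    simp only [sg, aeval_C, aeval_X, AlgHom.commutes, Polynomial.algebraMap_eq]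
    rw [← mul_assoc, ← mul_assoc, Algebra.commutes]

theorem psi0_d {μ γ : K} {w D : A} (h : D * w = μ • (w * D) + γ • D) (q : K[X][X]) :
    psi0 w D (X * sgQ μ γ q) = D * psi0 w D q := by
  induction q using Polynomial.induction_on' with
  | add p q hp hq => simp only [map_add, mul_add, hp, hq]
  | monomial n a =>
    have : (X : K[X][X]) * sgQ μ γ (monomial n a) = monomial (n + 1) (sg μ γ a) := by
      simp [sgQ, Polynomial.X_mul_monomial]
    rw [this, psi0_monomial, psi0_monomial, pow_succ', ← mul_assoc, ← mul_assoc, D_aeval h]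

theorem psi0_C (w D : A) (p : K[X]) (q : K[X][X]) :
    psi0 w D (C p * q) = aeval w p * psi0 w D q := by
  induction q using Polynomial.induction_on' with
  | add p q hp hq => simp only [map_add, mul_add, hp, hq]
  | monomial n a =>
    rw [C_mul_monomial, psi0_monomial, psi0_monomial, map_mul, mul_assoc]

theorem psi0_w (w D : A) (q : K[X][X]) : psi0 w D (C X * q) = w * psi0 w D q := by
  rw [psi0_C, aeval_X]

/-- the full map -/
def psi (w D U : A) : (ℕ →₀ K[X][X]) →ₗ[K] A :=
  Finsupp.lsum K fun i => (LinearMap.mulLeft K (U ^ i)).comp (psi0 w D)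

theorem psi_single (w D U : A) (i : ℕ) (q : K[X][X]) :
    psi w D U (Finsupp.single i q) = U ^ i * psi0 w D q := by
  simp only [psi, Finsupp.lsum_single, LinearMap.comp_apply, LinearMap.mulLeft_apply]

theorem psi_opU (w D U : A) (v : ℕ →₀ K[X][X]) :
    psi w D U (opU K K[X][X] v) = U * psi w D U v := by
  induction v using Finsupp.induction_linear with
  | zero => simp
  | add f g hf hg => simp only [map_add, mul_add, hf, hg]
  | single i q => rw [opU_single, psi_single, psi_single, pow_succ', mul_assoc]

theorem psi_opD_aux {α β γ lam μ : K} {D U : A} (hsum : lam + μ = α) (hprod : lam * μ = -β)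
    (r1 : D * U * U = α • (U * D * U) + β • (U * U * D) + γ • U)
    (r2 : D * D * U = α • (D * U * D) + β • (U * D * D) + γ • D) (i : ℕ) (q : K[X][X]) :
    D * (U ^ i * psi0 (wEl lam D U) D q) =
      U ^ i * (lam ^ i • psi0 (wEl lam D U) D (X * sgQ μ γ q))
      + U ^ (i - 1) * psi0 (wEl lam D U) D (cSeq α β γ (C X : K[X][X]) i * q) := by
  have hb : β = -(lam * μ) := by rw [hprod, neg_neg]
  rw [psi0_d (D_w hsum hprod r2)]
  induction i using Nat.twoStepInduction with
  | zero => simp [cSeq]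
  | one =>
    simp only [cSeq, psi0_w, pow_one, Nat.sub_self, pow_zero, one_mul]
    rw [← mul_assoc, DU_eq (lam := lam) (D := D) (U := U), add_mul, smul_mul_assoc, mul_smul_comm, mul_assoc]
  | more n ih1 ih2 =>
    have e : D * (U ^ (n + 2) * psi0 (wEl lam D U) D q) =
        α • (U * (D * (U ^ (n + 1) * psi0 (wEl lam D U) D q)))
        + β • (U * (U * (D * (U ^ n * psi0 (wEl lam D U) D q))))
        + γ • (U ^ (n + 1) * psi0 (wEl lam D U) D q) := by
      have := congrArg (fun z => z * (U ^ n * psi0 (wEl lam D U) D q)) r1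
      simpa only [add_mul, smul_mul_assoc, mul_assoc, pow_succ'] using this
    rw [e, ih1, ih2]
    have h1 : cSeq α β γ (C X : K[X][X]) (n + 2) = α • cSeq α β γ (C X : K[X][X]) (n + 1) + β • cSeq α β γ (C X : K[X][X]) n + γ • 1 := rfl
    have h0 : β • (U * (U * (U ^ (n - 1) * psi0 (wEl lam D U) D (cSeq α β γ (C X : K[X][X]) n * q)))) =
       β • (U ^ (n + 1) * psi0 (wEl lam D U) D (cSeq α β γ (C X : K[X][X]) n * q)) := by
      cases n with
      | zero => simp [cSeq]
      | succ n => simp [pow_succ', mul_assoc]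
    have h3 : n + 2 - 1 = n + 1 := rfl
    simp only [mul_add, smul_add]
    rw [h0, h1, h3]
    simp only [add_mul, smul_mul_assoc, map_add, map_smul, one_mul, mul_add, Nat.add_sub_cancel, mul_smul_comm, ← mul_assoc, ← pow_succ']
    subst hb; subst hsum
    module

theorem psi_opD {α β γ lam μ : K} {D U : A} (hsum : lam + μ = α) (hprod : lam * μ = -β)
    (r1 : D * U * U = α • (U * D * U) + β • (U * U * D) + γ • U)
    (r2 : D * D * U = α • (D * U * D) + β • (U * D * D) + γ • D) (v : ℕ →₀ K[X][X]) :
    psi (wEl lam D U) D U (opD α β γ lam (sgQ μ γ) (C X : K[X][X]) X v) = D * psi (wEl lam D U) D U v := by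
  induction v using Finsupp.induction_linear with
  | zero => simp
  | add f g hf hg => simp only [map_add, mul_add, hf, hg]
  | single i q =>
    rw [opD_single, map_add, psi_single, psi_single, psi_single, psi_opD_aux hsum hprod r1 r2, map_smul]

end psi

section du
variable (K : Type) [Field K] (α β γ : K)

theorem DownUp.r1 : D K α β γ * U K α β γ * U K α β γ =
    α • (U K α β γ * D K α β γ * U K α β γ) + β • (U K α β γ * U K α β γ * D K α β γ)
    + γ • U K α β γ := by
  have h := RingQuot.mkAlgHom_rel K (DownUpRel.rel1 (K := K) (a := α) (b := β) (g := γ))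
  simp only [map_mul, map_add, map_smul] at h
  exact h

theorem DownUp.r2 : D K α β γ * D K α β γ * U K α β γ =
    α • (D K α β γ * U K α β γ * D K α β γ) + β • (U K α β γ * D K α β γ * D K α β γ)
    + γ • D K α β γ := by
  have h := RingQuot.mkAlgHom_rel K (DownUpRel.rel2 (K := K) (a := α) (b := β) (g := γ))
  simp only [map_mul, map_add, map_smul] at h
  exact h

variable {K α β γ}

theorem DownUp.exists_lift {R : Type} [Semiring R] [Algebra K R] (Dr Ur : R)
    (r1 : Dr * Ur * Ur = α • (Ur * Dr * Ur) + β • (Ur * Ur * Dr) + γ • Ur)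
    (r2 : Dr * Dr * Ur = α • (Dr * Ur * Dr) + β • (Ur * Dr * Dr) + γ • Dr) :
    ∃ φ : DownUp K α β γ →ₐ[K] R, φ (D K α β γ) = Dr ∧ φ (U K α β γ) = Ur := by
  refine ⟨RingQuot.liftAlgHom K ⟨FreeAlgebra.lift K ![Dr, Ur], ?_⟩, ?_, ?_⟩
  · intro x y h
    cases h with
    | rel1 => simpa using r1
    | rel2 => simpa using r2
  · simp [D]
  · simp [U]

theorem DownUp.induct {P : DownUp K α β γ → Prop} (hk : ∀ k : K, P (algebraMap K _ k))
    (hD : P (D K α β γ)) (hU : P (U K α β γ)) (hm : ∀ a b, P a → P b → P (a * b))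
    (ha : ∀ a b, P a → P b → P (a + b)) (a : DownUp K α β γ) : P a := by
  obtain ⟨a, rfl⟩ := RingQuot.mkAlgHom_surjective K (DownUpRel K α β γ) a
  induction a using FreeAlgebra.induction with
  | grade0 r => rw [AlgHom.commutes]; exact hk r
  | grade1 x =>
    fin_cases x
    · exact hD
    · exact hU
  | mul a b h1 h2 => rw [map_mul]; exact hm _ _ h1 h2
  | add a b h1 h2 => rw [map_add]; exact ha _ _ h1 h2

open Polynomial in
theorem DownUp.U_reg {lam μ : K} (hsum : lam + μ = α) (hprod : lam * μ = -β)
    (a : DownUp K α β γ) (h : U K α β γ * a = 0) : a = 0 := by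
  have hw : sgQ μ γ (C X : K[X][X]) = μ • C X + γ • 1 := by
    simp only [sgQ, sg, coe_mapAlgHom, map_C, AlgHom.coe_toRingHom, aeval_X, map_add, map_mul]
    simp [Algebra.smul_def, Polynomial.algebraMap_apply]
  have hd : sgQ μ γ (X : K[X][X]) = X := by simp [sgQ]
  obtain ⟨ρ, hD, hU⟩ := DownUp.exists_lift (opD α β γ lam (sgQ μ γ) (C X : K[X][X]) X) (opU K K[X][X])
    (op_rel1 hsum hprod _ _ _) (op_rel2 hsum hprod _ _ _ hw hd)
  have key : ∀ a : DownUp K α β γ, ∀ v, psi (wEl lam (D K α β γ) (U K α β γ)) (D K α β γ) (U K α β γ) (ρ a v)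
      = a * psi (wEl lam (D K α β γ) (U K α β γ)) (D K α β γ) (U K α β γ) v := by
    intro a
    induction a using DownUp.induct with
    | hk k => intro v; simp [Algebra.smul_def]
    | hD => intro v; rw [hD, psi_opD hsum hprod (DownUp.r1 K α β γ) (DownUp.r2 K α β γ)]
    | hU => intro v; rw [hU, psi_opU]
    | hm a b h1 h2 => intro v; rw [map_mul, Module.End.mul_apply, h1, h2, mul_assoc]
    | ha a b h1 h2 => intro v; rw [map_add, LinearMap.add_apply, map_add, h1, h2, add_mul]
  have h1 : ρ (U K α β γ * a) (Finsupp.single 0 1) = 0 := by rw [h]; simp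
  rw [map_mul, Module.End.mul_apply, hU] at h1
  have h2 := opU_inj _ h1
  have h3 := key a (Finsupp.single 0 1)
  rw [h2, map_zero, psi_single, ← Polynomial.monomial_zero_one, psi0_monomial] at h3
  simpa using h3.symm

end du

section model_inst
open Polynomial

theorem exists_model {K : Type} [Field K] {α β γ lam μ : K} (hγ : γ ≠ 0) (hβ : β ≠ 0)
    (hsum : lam + μ = α) (hprod : lam * μ = -β) (t a h h' : DownUp K α β γ)
    (h1 : (DownUp.D K α β γ + 1) * t = DownUp.U K α β γ * a)
    (h2 : DownUp.U K α β γ * DownUp.U K α β γ = t * h)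
    (h3 : fEl γ lam μ (DownUp.D K α β γ) (DownUp.U K α β γ) = t * h') : False := by
  have hb : β = -(lam * μ) := by rw [hprod, neg_neg]
  have hl : lam ≠ 0 := by rintro rfl; apply hβ; rw [hb]; simp
  have hm : μ ≠ 0 := by rintro rfl; apply hβ; rw [hb]; simp
  letI : Invertible μ := invertibleOfNonzero hm
  letI : Invertible lam := invertibleOfNonzero hl
  letI : Invertible (C lam : K[X]) := Invertible.map (C : K →+* K[X]) lam
  let σ : K[X][X] ≃ₐ[K] K[X][X] :=
    (mapAlgEquiv (algEquivCMulXAddC μ γ)).trans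
      ((algEquivCMulXAddC (C lam) (X : K[X])).restrictScalars K)
  have hσX : σ X = lam • X + C X := by
    simp [σ, Algebra.smul_def, Polynomial.algebraMap_apply]
  have hσC : σ (C X) = μ • C X + γ • 1 := by
    simp [σ, Algebra.smul_def, Polynomial.algebraMap_apply]
  letI act : MulSemiringAction (Multiplicative ℤ) K[X][X] :=
    MulSemiringAction.compHom K[X][X] (zpowersHom (K[X][X] ≃ₐ[K] K[X][X]) σ)
  have hact : ∀ (n : Multiplicative ℤ) (b : K[X][X]),
    n • b = (zpowersHom (K[X][X] ≃ₐ[K] K[X][X]) σ n) b := fun _ _ => rfl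
  haveI : SMulCommClass (Multiplicative ℤ) K K[X][X] := ⟨fun n k b => by
    rw [hact, hact, map_smul]⟩
  have hg : ∀ b : K[X][X], (Multiplicative.ofAdd (1 : ℤ)) • b = σ b := by
    intro b; rw [hact]; simp
  have hx : Multiplicative.ofAdd (1 : ℤ) • Multiplicative.ofAdd (1 : ℤ) • (X : K[X][X]) =
      α • Multiplicative.ofAdd (1 : ℤ) • (X : K[X][X]) + β • X + γ • 1 := by
    rw [hg, hg, hσX, map_add, map_smul, hσX, hσC]
    subst hb; subst hsum
    module
  obtain ⟨φ, hD, hU⟩ := DownUp.exists_lift (K := K) (α := α) (β := β) (γ := γ)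
    (SkewMonoidAlgebra.single (Multiplicative.ofAdd (1 : ℤ)) (1 : K[X][X]))
    (SkewMonoidAlgebra.single (Multiplicative.ofAdd (1 : ℤ))⁻¹ (X : K[X][X]))
    (model_rel1 _ _ _ _ _ hx _ _ rfl rfl) (model_rel2 _ _ _ _ _ hx _ _ rfl rfl)
  refine model_no_gen (K := K) (B := K[X][X]) (Multiplicative.ofAdd (1 : ℤ)) (by decide) X X_ne_zero γ lam μ _ _ rfl rfl ?_
    (φ t) (φ a) (φ h) (φ h') ?_ ?_ ?_
  · rw [hg, hσX, add_sub_cancel_left, X_dvd_iff]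
    have : (C X * (C X - γ • 1) : K[X][X]) = C (X * (X - C γ)) := by
      simp [Algebra.smul_def, Polynomial.algebraMap_apply]
    rw [this, coeff_C_zero]
    exact mul_ne_zero X_ne_zero (X_sub_C_ne_zero γ)
  · rw [← hD, ← hU, ← map_mul, ← h1, map_mul, map_add, map_one]
  · rw [← hU, ← map_mul, ← map_mul, h2]
  · rw [← map_mul, ← h3, ← hD, ← hU]
    simp only [fEl, wEl, map_add, map_sub, map_mul, map_smul, map_neg, map_one]

end model_inst

/-- For `char K = 0`, `β ≠ 0`, `γ ≠ 0`, and both roots `λ, μ` of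
`t² − αt − β` in `K`, the down-up algebra `A = A(α,β,γ)` has a right ideal that is stably
free but not free as a right `A`-module. -/
theorem downUp_gamma_ne_zero_has_nontrivial_stablyFree_right_ideal
    (K : Type) [Field K] [CharZero K] (α β γ lam μ : K) (hβ : β ≠ 0) (hγ : γ ≠ 0)
    (hsum : lam + μ = α) (hprod : lam * μ = -β) :
    ∃ I : Submodule (DownUp K α β γ)ᵐᵒᵖ (DownUp K α β γ),
      IsStablyFreeRight (DownUp K α β γ) I ∧ ¬ Module.Free (DownUp K α β γ)ᵐᵒᵖ I := by
  let D := DownUp.D K α β γ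
  let U := DownUp.U K α β γ
  have r1 : D * U * U = α • (U * D * U) + β • (U * U * D) + γ • U := DownUp.r1 K α β γ
  have r2 : D * D * U = α • (D * U * D) + β • (U * D * D) + γ • D := DownUp.r2 K α β γ
  let J : Submodule (DownUp K α β γ)ᵐᵒᵖ (DownUp K α β γ) :=
    { carrier := {f | ∃ a, (D + 1) * f = U * a}
      add_mem' := by
        rintro x y ⟨a, ha⟩ ⟨b, hb⟩
        exact ⟨a + b, by rw [mul_add, mul_add, ha, hb]⟩
      zero_mem' := ⟨0, by simp⟩
      smul_mem' := by
        rintro r x ⟨a, ha⟩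
        exact ⟨a * r.unop, by rw [MulOpposite.smul_eq_mul_unop, ← mul_assoc, ha, mul_assoc]⟩ }
  have hJ : ∀ f, f ∈ J ↔ ∃ a, (D + 1) * f = U * a := fun f => Iff.rfl
  obtain ⟨u, v, huv⟩ := exists_uv hγ hsum hprod r2
  obtain ⟨e⟩ := stably_free_equiv U (D + 1) u v (fun a => DownUp.U_reg hsum hprod a) huv J hJ
  refine ⟨J, ⟨1, 2, ⟨?_⟩⟩, ?_⟩
  · exact ((LinearEquiv.refl _ J).prodCongr
      (LinearEquiv.funUnique (Fin 1) (DownUp K α β γ)ᵐᵒᵖ (DownUp K α β γ))).trans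
      (e.symm.trans (LinearEquiv.finTwoArrow (DownUp K α β γ)ᵐᵒᵖ (DownUp K α β γ)).symm)
  · intro hF
    obtain ⟨aug, -, -⟩ := DownUp.exists_lift (K := K) (α := α) (β := β) (γ := γ) (0 : K) 0
      (by simp) (by simp)
    obtain ⟨t, ⟨a, ha⟩, ht⟩ := generator_of_free aug.toRingHom J e hF
    obtain ⟨h, h2⟩ := ht (U * U) ⟨α • (D * U) + β • (U * D) + γ • 1 + U, by
      rw [add_mul, ← mul_assoc, r1]
      simp only [mul_add, mul_smul_comm, mul_one, one_mul, mul_assoc]⟩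
    obtain ⟨h', h3⟩ := ht (fEl γ lam μ D U) (f_mem hsum hprod r2)
    exact exists_model hγ hβ hsum hprod t a h h' ha h2 h3
end
end

section
/- Let K be a field of characteristic zero, α, β ∈ K with β ≠ 0, and suppose the roots λ, μ of t² − αt − β lie in K. Then the down-up algebra A = A(α,β,0) has a non-trivial stably free right ideal, i.e. a right ideal that is stably free but not free as a right A-module. -/
noncomputable section

theorem ibn_of_hom {A K : Type} [Ring A] [Field K] (e : A →+* K) : InvariantBasisNumber A := by
  rw [invariantBasisNumber_iff_matrix]
  intro n m f g hfg hgf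
  have h1 : f.map e * g.map e = 1 := by
    rw [← Matrix.map_mul, hfg]; simp
  have h2 : g.map e * f.map e = 1 := by
    rw [← Matrix.map_mul, hgf]; simp
  simpa using Matrix.square_of_invertible _ _ h1 h2

/-- The right ideal `{y : b y ∈ a A}`. -/
def colonIdeal {A : Type} [Ring A] (a b : A) : Submodule Aᵐᵒᵖ A where
  carrier := {y | ∃ z, b * y = a * z}
  add_mem' := by
    rintro x y ⟨z, hz⟩ ⟨w, hw⟩
    exact ⟨z + w, by rw [mul_add, mul_add, hz, hw]⟩
  zero_mem' := ⟨0, by simp⟩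
  smul_mem' := by
    rintro c x ⟨z, hz⟩
    refine ⟨z * c.unop, ?_⟩
    rw [MulOpposite.smul_eq_mul_unop, ← mul_assoc, hz, mul_assoc]

theorem mem_colonIdeal {A : Type} [Ring A] {a b y : A} :
    y ∈ colonIdeal a b ↔ ∃ z, b * y = a * z := Iff.rfl

theorem colon_equiv {A : Type} [Ring A] (a b p q : A) (h : a * p + b * q = 1)
    (ha : ∀ x, a * x = 0 → x = 0) :
    Nonempty ((colonIdeal a b × (Fin 1 → A)) ≃ₗ[Aᵐᵒᵖ] (Fin 2 → A)) := by
  have hbq : b * q = 1 - a * p := by rw [← h]; abel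
  let F : (Fin 2 → A) →ₗ[Aᵐᵒᵖ] (colonIdeal a b × (Fin 1 → A)) :=
    { toFun := fun v => (⟨v 1 - q * (a * v 0 + b * v 1), p * (a * v 0 + b * v 1) - v 0, by
        rw [mul_sub, mul_sub, ← mul_assoc b q, hbq]; noncomm_ring⟩,
        fun _ => a * v 0 + b * v 1)
      map_add' := by
        intro v w
        ext
        · simp; noncomm_ring
        · simp; noncomm_ring
      map_smul' := by
        intro c v
        ext
        · simp [MulOpposite.smul_eq_mul_unop]; noncomm_ring
        · simp [MulOpposite.smul_eq_mul_unop]; noncomm_ring }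
  refine ⟨(LinearEquiv.ofBijective F ⟨?_, ?_⟩).symm⟩
  · rw [injective_iff_map_eq_zero]
    intro v hv
    have e2 : a * v 0 + b * v 1 = 0 := congrFun (congrArg Prod.snd hv) 0
    have e1 : v 1 - q * (a * v 0 + b * v 1) = 0 := congrArg Subtype.val (congrArg Prod.fst hv)
    rw [e2, mul_zero, sub_zero] at e1
    rw [e1, mul_zero, add_zero] at e2
    have e3 := ha _ e2
    ext i
    fin_cases i
    · exact e3
    · exact e1
  · rintro ⟨⟨y, z, hz⟩, c⟩
    have key : a * (p * c 0 - z) + b * (y + q * c 0) = c 0 := by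
      rw [mul_add, hz, ← mul_assoc, hbq]; noncomm_ring
    refine ⟨![p * c 0 - z, y + q * c 0], ?_⟩
    ext i
    · simp [F, key]
    · fin_cases i
      simp [F, key]

theorem principal_of_free {A : Type} [Ring A] [InvariantBasisNumber A] (J : Submodule Aᵐᵒᵖ A)
    (e : (J × (Fin 1 → A)) ≃ₗ[Aᵐᵒᵖ] (Fin 2 → A)) [Module.Free Aᵐᵒᵖ J] :
    ∃ f ∈ J, ∀ x ∈ J, ∃ h, x = f * h := by
  have := nontrivial_of_invariantBasisNumber A
  let o : Aᵐᵒᵖ ≃ₗ[Aᵐᵒᵖ] A :=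
    { toFun := fun x => x.unop
      invFun := fun x => MulOpposite.op x
      map_add' := by intros; rfl
      map_smul' := by intro x y; simp [MulOpposite.smul_eq_mul_unop]
      left_inv := fun _ => rfl
      right_inv := fun _ => rfl }
  let B := Module.Free.chooseBasis Aᵐᵒᵖ J
  let b1 : Module.Basis (Fin 1) Aᵐᵒᵖ (Fin 1 → A) :=
    (Pi.basisFun Aᵐᵒᵖ (Fin 1)).map (LinearEquiv.piCongrRight fun _ => o)
  let b2 : Module.Basis (Fin 2) Aᵐᵒᵖ (Fin 2 → A) :=
    (Pi.basisFun Aᵐᵒᵖ (Fin 2)).map (LinearEquiv.piCongrRight fun _ => o)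
  let i := ((B.prod b1).map e).indexEquiv b2
  have fin : Finite (Module.Free.ChooseBasisIndex Aᵐᵒᵖ J) :=
    Finite.of_injective (fun x => i (Sum.inl x)) (fun x y h => by simpa using h)
  have := Fintype.ofFinite (Module.Free.ChooseBasisIndex Aᵐᵒᵖ J)
  have hc : Fintype.card (Module.Free.ChooseBasisIndex Aᵐᵒᵖ J) = 1 := by
    have := Fintype.card_congr i
    simp at this
    omega
  obtain ⟨j, hj⟩ := Fintype.card_eq_one_iff.1 hc
  refine ⟨B j, (B j).2, fun x hx => ⟨(B.repr ⟨x, hx⟩ j).unop, ?_⟩⟩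
  have h1 := B.sum_repr ⟨x, hx⟩
  have h2 : (Finset.univ : Finset (Module.Free.ChooseBasisIndex Aᵐᵒᵖ J)) = {j} := by
    ext k; simp [hj k]
  rw [h2, Finset.sum_singleton] at h1
  have h3 := congrArg Subtype.val h1
  simpa [MulOpposite.smul_eq_mul_unop] using h3.symm

namespace SkewL
open SkewMonoidAlgebra

abbrev G := Multiplicative ℤ

variable {S : Type} [CommRing S] [IsDomain S] [MulSemiringAction G S]

theorem coeff_top (f h : SkewMonoidAlgebra S G) (m n : G)
    (H : ∀ a, f.coeff a ≠ 0 → a ≠ m → h.coeff (a⁻¹ * (m * n)) = 0) :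
    (f * h).coeff (m * n) = f.coeff m * m • h.coeff n := by
  rw [coeff_mul_left, sum_def']
  rw [Finset.sum_eq_single m]
  · simp
  · intro a ha ham
    rw [H a (by simpa using ha) ham]; simp
  · intro hm
    have : f.coeff m = 0 := by simpa using hm
    simp [this]

theorem monomial_of_mul (f h : SkewMonoidAlgebra S G) (s : S) (hs : s ≠ 0)
    (hf : f * h = single 1 s) : ∃ k c, f = single k c := by
  classical
  have hne : single (1 : G) s ≠ 0 := by simpa [single_eq_zero] using hs
  have f0 : f ≠ 0 := by rintro rfl; simp at hf; exact hne hf.symm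
  have h0 : h ≠ 0 := by rintro rfl; simp at hf; exact hne hf.symm
  have fn : f.support.Nonempty := by
    rw [Finset.nonempty_iff_ne_empty, Ne, support_eq_empty]; exact f0
  have hn : h.support.Nonempty := by
    rw [Finset.nonempty_iff_ne_empty, Ne, support_eq_empty]; exact h0
  have key : ∀ m n : G, m ∈ f.support → n ∈ h.support →
      (∀ a, f.coeff a ≠ 0 → a ≠ m → h.coeff (a⁻¹ * (m * n)) = 0) → m * n = 1 := by
    intro m n hm hn' H
    by_contra hmn
    have := coeff_top f h m n H
    rw [hf, coeff_single_apply, if_neg (Ne.symm hmn)] at this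
    rcases mul_eq_zero.1 this.symm with h1 | h1
    · exact (mem_support_iff.1 hm) h1
    · rw [smul_eq_zero_iff_eq] at h1
      exact (mem_support_iff.1 hn') h1
  have k1 := key _ _ (f.support.max'_mem fn) (h.support.max'_mem hn) (by
    intro a ha ham
    by_contra hb
    have l1 := f.support.le_max' a (mem_support_iff.2 ha)
    have l2 := h.support.le_max' _ (mem_support_iff.2 hb)
    have l3 : a < f.support.max' fn := lt_of_le_of_ne l1 ham
    rw [inv_mul_le_iff_le_mul] at l2
    exact absurd (le_of_mul_le_mul_right' l2) (not_le.2 l3))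
  have k2 := key _ _ (f.support.min'_mem fn) (h.support.min'_mem hn) (by
    intro a ha ham
    by_contra hb
    have l1 := f.support.min'_le a (mem_support_iff.2 ha)
    have l2 := h.support.min'_le _ (mem_support_iff.2 hb)
    have l3 : f.support.min' fn < a := lt_of_le_of_ne l1 (Ne.symm ham)
    rw [le_inv_mul_iff_mul_le] at l2
    exact absurd (le_of_mul_le_mul_right' l2) (not_le.2 l3))
  have l1 : f.support.min' fn ≤ f.support.max' fn := Finset.min'_le_max' _ fn
  have l2 : h.support.min' hn ≤ h.support.max' hn := Finset.min'_le_max' _ hn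
  have l3 : f.support.max' fn ≤ f.support.min' fn := by
    rw [mul_eq_one_iff_eq_inv] at k1 k2
    rw [k1, k2]
    exact inv_le_inv_iff.2 l2
  refine ⟨f.support.min' fn, f.coeff (f.support.min' fn), ?_⟩
  ext a
  rw [coeff_single_apply]
  split_ifs with hh
  · rw [hh]
  · by_contra hb
    apply hh
    exact le_antisymm (f.support.min'_le a (mem_support_iff.2 hb))
      ((f.support.le_max' a (mem_support_iff.2 hb)).trans l3)

abbrev t : G := Multiplicative.ofAdd 1

theorem t_ne : (t : G) ≠ 1 := by decide

theorem nonprincipal (f h1 h2 z y : SkewMonoidAlgebra S G) (s0 : S) (s0n : s0 ≠ 0)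
    (hu : ¬ IsUnit s0) (hc : IsCoprime s0 (t • s0))
    (e1 : f * h1 = single 1 (s0 * (t • s0))) (e2 : f * h2 = y) (hy : y.coeff 1 = t • s0)
    (e3 : (1 + single t 1) * f = single 1 (t • s0) * z) : False := by
  have s1n : t • s0 ≠ 0 := by rwa [Ne, smul_eq_zero_iff_eq]
  obtain ⟨k, c, rfl⟩ := monomial_of_mul f h1 _ (mul_ne_zero s0n s1n) e1
  have tk : t * k ≠ k := by simpa using t_ne
  have d1 : t • s0 ∣ c := by
    have := congrArg (fun w => w.coeff k) e3
    simp only [add_mul, one_mul, single_mul_single, coeff_add, Finsupp.add_apply,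
      coeff_single_one_mul] at this
    rw [coeff_single_apply, coeff_single_apply, if_pos rfl, if_neg tk, add_zero] at this
    exact ⟨_, this⟩
  have d2 : s0 ∣ c := by
    have := congrArg (fun w => w.coeff (t * k)) e3
    simp only [add_mul, one_mul, single_mul_single, coeff_add, Finsupp.add_apply,
      coeff_single_one_mul] at this
    rw [coeff_single_apply, coeff_single_apply, if_pos rfl, if_neg tk.symm, zero_add] at this
    refine ⟨t⁻¹ • z.coeff (t * k), ?_⟩
    have := congrArg (fun w => t⁻¹ • w) this
    simpa [smul_mul'] using this
  obtain ⟨d, hd⟩ := hc.mul_dvd d2 d1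
  have := congrArg (fun w => w.coeff 1) e2
  simp only [coeff_single_mul] at this
  rw [hy, hd] at this
  apply hu
  refine IsUnit.of_mul_eq_one (d * k • h2.coeff (k⁻¹ * 1)) ?_
  apply mul_left_cancel₀ s1n
  rw [mul_one]
  conv_rhs => rw [← this]
  ring_nf

end SkewL

namespace DUAux
open SkewMonoidAlgebra SkewL

variable {K : Type} [Field K] {α β : K}

/-- The generators. -/
abbrev dd (K : Type) [Field K] (α β : K) : DownUp K α β 0 := DownUp.D K α β 0
/-- The generators. -/
abbrev uu (K : Type) [Field K] (α β : K) : DownUp K α β 0 := DownUp.U K α β 0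

theorem rel1 (K : Type) [Field K] (α β : K) : dd K α β * uu K α β * uu K α β =
    α • (uu K α β * dd K α β * uu K α β) + β • (uu K α β * uu K α β * dd K α β) := by
  have := RingQuot.mkAlgHom_rel K (DownUpRel.rel1 (K := K) (a := α) (b := β) (g := 0))
  simpa [DownUp.D, DownUp.U] using this

theorem rel2 (K : Type) [Field K] (α β : K) : dd K α β * dd K α β * uu K α β =
    α • (dd K α β * uu K α β * dd K α β) + β • (uu K α β * dd K α β * dd K α β) := by
  have := RingQuot.mkAlgHom_rel K (DownUpRel.rel2 (K := K) (a := α) (b := β) (g := 0))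
  simpa [DownUp.D, DownUp.U] using this

theorem exists_lift {B : Type} [Ring B] [Algebra K B] (d u : B)
    (h1 : d * u * u = α • (u * d * u) + β • (u * u * d))
    (h2 : d * d * u = α • (d * u * d) + β • (u * d * d)) :
    ∃ φ : DownUp K α β 0 →ₐ[K] B, φ (dd K α β) = d ∧ φ (uu K α β) = u := by
  refine ⟨RingQuot.liftAlgHom K ⟨FreeAlgebra.lift K ![d, u], ?_⟩, ?_, ?_⟩
  · rintro x y (_ | _)
    · simpa using h1
    · simpa using h2
  · simp [DownUp.D]
  · simp [DownUp.U]

theorem hom_ext {B : Type} [Ring B] [Algebra K B] (φ ψ : DownUp K α β 0 →ₐ[K] B)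
    (h1 : φ (dd K α β) = ψ (dd K α β)) (h2 : φ (uu K α β) = ψ (uu K α β)) : φ = ψ := by
  apply RingQuot.ringQuot_ext'
  apply FreeAlgebra.hom_ext
  funext i
  fin_cases i
  · exact h1
  · exact h2

theorem ibn (K : Type) [Field K] (α β : K) : InvariantBasisNumber (DownUp K α β 0) := by
  obtain ⟨φ, -, -⟩ := exists_lift (K := K) (α := α) (β := β) (B := K) 0 0 (by simp) (by simp)
  exact ibn_of_hom φ.toRingHom

open Polynomial in
/-- The grading homomorphism. -/
theorem exists_grading (K : Type) [Field K] (α β : K) :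
    ∃ φ : DownUp K α β 0 →ₐ[K] (DownUp K α β 0)[X],
      φ (dd K α β) = C (dd K α β) * X ∧ φ (uu K α β) = C (uu K α β) * X ∧
      ∀ x, φ x = 0 → x = 0 := by
  have e : ∀ a b c : DownUp K α β 0, C a * X * (C b * X) * (C c * X) = C (a * b * c) * X ^ 3 := by
    intro a b c
    simp only [C_mul_X_eq_monomial, C_mul_X_pow_eq_monomial, monomial_mul_monomial]
  obtain ⟨φ, h1, h2⟩ := exists_lift (K := K) (α := α) (β := β) (B := (DownUp K α β 0)[X])
    (C (dd K α β) * X) (C (uu K α β) * X)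
    (by rw [e, e, e, rel1]; simp [add_mul, ← smul_C])
    (by rw [e, e, e, rel2]; simp [add_mul, ← smul_C])
  refine ⟨φ, h1, h2, fun x hx => ?_⟩
  let ev : (DownUp K α β 0)[X] →ₐ[K] DownUp K α β 0 :=
    { Polynomial.eval₂RingHom' (RingHom.id _) 1 (fun _ => Commute.one_right _) with
      commutes' := fun k => by
        simp [Polynomial.algebraMap_apply, Polynomial.eval₂RingHom'] }
  have h : ev.comp φ = AlgHom.id K _ := by
    apply hom_ext
    · simp [h1, ev, Polynomial.eval₂RingHom']
    · simp [h2, ev, Polynomial.eval₂RingHom']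
  have := DFunLike.congr_fun h x
  simpa [hx] using this.symm

open Polynomial in
theorem regular_aux {A : Type} [Ring A] (c : A) (n : ℕ) (p : A[X])
    (h : (1 + C c * X ^ (n + 1)) * p = 0) : p = 0 := by
  have h' : p = - (C c * (p * X ^ (n + 1))) := by
    rw [add_mul, one_mul, mul_assoc, X_pow_mul] at h
    exact eq_neg_of_add_eq_zero_left h
  ext m
  induction m using Nat.strong_induction_on with
  | _ m ih =>
    rw [h']
    simp only [Polynomial.coeff_neg, coeff_C_mul, coeff_mul_X_pow', Polynomial.coeff_zero]
    split_ifs with hm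
    · rw [ih _ (by omega)]; simp
    · simp

theorem main_aux {S : Type} [CommRing S] [IsDomain S] [Algebra K S] [MulSemiringAction G S]
    [SMulCommClass G K S] (r0 r1 r2 r3 P Q : DownUp K α β 0) (c z : K)
    (h0 : dd K α β * r0 = r1 * dd K α β) (h1 : dd K α β * r1 = r2 * dd K α β)
    (h2 : dd K α β * r2 = r3 * dd K α β) (h3 : c • r2 - r3 = z • r1)
    (hcop : r0 * P + r1 * Q = 1) (hcomm : r0 * r1 = r1 * r0)
    (hreg : ∀ x, r1 * x = 0 → x = 0)
    (ρ : DownUp K α β 0 →ₐ[K] SkewMonoidAlgebra S G)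
    (hD : ρ (dd K α β) = single t 1) (s0 : S) (hr0 : ρ r0 = single 1 s0)
    (hr1 : ρ r1 = single 1 (t • s0)) (s0n : s0 ≠ 0)
    (hu : ¬ IsUnit s0) :
    ∃ I : Submodule (DownUp K α β 0)ᵐᵒᵖ (DownUp K α β 0),
      IsStablyFreeRight (DownUp K α β 0) I ∧ ¬ Module.Free (DownUp K α β 0)ᵐᵒᵖ I := by
  set d := dd K α β with hd
  have hc : IsCoprime s0 (t • s0) := by
    refine ⟨(ρ P).coeff 1, (ρ Q).coeff 1, ?_⟩
    have := congrArg (fun w => (ρ w).coeff 1) hcop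
    simp only [map_add, map_mul, hr0, hr1, coeff_add, Finsupp.add_apply, coeff_single_one_mul,
      map_one, coeff_one_one] at this
    rw [← this]; ring
  obtain ⟨e⟩ := colon_equiv r1 (1 + d) (Q - d * P) (r0 * P) (by
    calc _ = (r0 * P + r1 * Q) + (d * r0 - r1 * d) * P := by
          simp only [add_mul, mul_sub, sub_mul, one_mul, mul_assoc]
          abel
      _ = 1 := by rw [hcop, h0]; simp) hreg
  refine ⟨colonIdeal r1 (1 + d), ⟨1, 2, ⟨e⟩⟩, fun hfree => ?_⟩
  have := ibn K α β
  obtain ⟨f, ⟨w, hw⟩, hgen⟩ := principal_of_free _ e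
  obtain ⟨y1, hy1⟩ := hgen (r0 * r1) ⟨r0 + r2 * d, by
    calc _ = r0 * r1 + (d * r0) * r1 := by noncomm_ring
      _ = r0 * r1 + r1 * (d * r1) := by rw [h0]; noncomm_ring
      _ = _ := by rw [h1, hcomm]; noncomm_ring⟩
  obtain ⟨y2, hy2⟩ := hgen (r1 + (c • r1 - r2) * d) ⟨1 + c • d + z • (d * d), by
    calc _ = r1 + c • (r1 * d) + (c • (d * r1) - d * r2) * d + (d * r1 - r2 * d) := by
          simp only [add_mul, mul_add, sub_mul, mul_sub, one_mul, smul_mul_assoc, mul_smul_comm,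
            mul_assoc, smul_add, smul_sub]
          abel
      _ = r1 + c • (r1 * d) + (c • r2 - r3) * d * d := by
          rw [h1, h2]
          simp only [sub_mul, smul_mul_assoc, sub_self, add_zero]
      _ = _ := by
          rw [h3]
          simp only [mul_add, mul_one, smul_mul_assoc, mul_smul_comm, mul_assoc]⟩
  refine nonprincipal (ρ f) (ρ y1) (ρ y2) (ρ w) _ s0 s0n hu hc ?_ (map_mul ρ f y2).symm ?_ ?_
  · rw [← map_mul, ← hy1, map_mul, hr0, hr1]; simp
  · rw [← hy2]
    have e1 : ρ (r2 * d) = single t (t • t • s0) := by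
      rw [← h1, map_mul, hD, hr1]; simp
    rw [sub_mul, smul_mul_assoc, map_add, map_sub, map_smul, map_mul ρ r1, hr1, hD, e1]
    simp
  · rw [← hr1, ← map_mul, ← hw, map_mul, map_add, hD, map_one]

theorem exists_rep {S : Type} [CommRing S] [Algebra K S] [MulSemiringAction G S]
    [SMulCommClass G K S] (u : S) (h : t • t • u = α • t • u + β • u) :
    ∃ ρ : DownUp K α β 0 →ₐ[K] SkewMonoidAlgebra S G,
      ρ (dd K α β) = single t 1 ∧ ρ (uu K α β) = single t⁻¹ u := by
  apply exists_lift
  · have h' : t • u = α • u + β • t⁻¹ • u := by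
      have := congrArg (fun w => t⁻¹ • w) h
      simpa [smul_comm (t⁻¹ : G) α, smul_comm (t⁻¹ : G) β] using this
    have g1 : (t : G) * t⁻¹ * t⁻¹ = t⁻¹ := by group
    have g2 : (t : G)⁻¹ * t * t⁻¹ = t⁻¹ := by group
    have g3 : (t : G)⁻¹ * t⁻¹ * t = t⁻¹ := by group
    simp only [single_mul_single, smul_single, g1, g2, g3]
    rw [← single_add]
    congr 1
    simp only [mul_inv_cancel, inv_mul_cancel, one_smul, smul_one, mul_one, one_mul]
    rw [h', add_mul, smul_mul_assoc, smul_mul_assoc, mul_comm (t⁻¹ • u)]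
  · have g1 : (t : G) * t * t⁻¹ = t := by group
    have g2 : (t : G) * t⁻¹ * t = t := by group
    have g3 : (t : G)⁻¹ * t * t = t := by group
    simp only [single_mul_single, smul_single, g1, g2, g3]
    rw [← single_add]
    congr 1
    simp only [smul_one, mul_one, one_mul]
    rw [← h, smul_smul]

theorem exists_action (K : Type) [Field K] (α β : K) (hβ : β ≠ 0) :
    ∃ σ : MvPolynomial (Fin 2) K ≃ₐ[K] MvPolynomial (Fin 2) K,
      σ (MvPolynomial.X 0) = MvPolynomial.X 1 ∧
      σ (MvPolynomial.X 1) = α • MvPolynomial.X 1 + β • MvPolynomial.X 0 := by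
  refine ⟨AlgEquiv.ofAlgHom
    (MvPolynomial.aeval ![MvPolynomial.X 1, α • MvPolynomial.X 1 + β • MvPolynomial.X 0])
    (MvPolynomial.aeval ![β⁻¹ • (MvPolynomial.X 1 - α • MvPolynomial.X 0), MvPolynomial.X 0])
    ?_ ?_, ?_, ?_⟩
  · ext i
    fin_cases i
    · simp [smul_smul, hβ]
    · simp
  · ext i
    fin_cases i
    · simp
    · simp [smul_smul, hβ]
  · simp
  · simp

/-- The normal element. -/
def om (K : Type) [Field K] (α β μ : K) : DownUp K α β 0 :=
  dd K α β * uu K α β - μ • (uu K α β * dd K α β)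

theorem smul_aux {M : Type} [AddCommGroup M] [Module K M] {lam μ : K} (hsum : lam + μ = α)
    (hprod : lam * μ = -β) (x y : M) :
    α • x + β • y - μ • x = lam • (x - μ • y) := by
  have hb : β = - (lam * μ) := by rw [hprod, neg_neg]
  rw [← hsum, hb]
  module

theorem d_om {lam μ : K} (hsum : lam + μ = α) (hprod : lam * μ = -β) :
    dd K α β * om K α β μ = lam • (om K α β μ * dd K α β) := by
  have hb : β = - (lam * μ) := by rw [hprod, neg_neg]
  have h := rel2 K α β
  unfold om
  rw [mul_sub, ← mul_assoc, h, sub_mul, mul_smul_comm, smul_mul_assoc, ← mul_assoc]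
  generalize dd K α β * uu K α β * dd K α β = x
  generalize uu K α β * dd K α β * dd K α β = y
  exact smul_aux hsum hprod _ _

theorem om_u {lam μ : K} (hsum : lam + μ = α) (hprod : lam * μ = -β) :
    om K α β μ * uu K α β = lam • (uu K α β * om K α β μ) := by
  have hb : β = - (lam * μ) := by rw [hprod, neg_neg]
  have h := rel1 K α β
  unfold om
  rw [sub_mul, h, mul_sub, smul_mul_assoc, mul_smul_comm, ← mul_assoc, ← mul_assoc]
  generalize uu K α β * dd K α β * uu K α β = x
  generalize uu K α β * uu K α β * dd K α β = y
  exact smul_aux hsum hprod _ _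

theorem regular {x : DownUp K α β 0} {n : ℕ}
    (hx : ∀ φ : DownUp K α β 0 →ₐ[K] Polynomial (DownUp K α β 0),
      φ (dd K α β) = Polynomial.C (dd K α β) * Polynomial.X →
      φ (uu K α β) = Polynomial.C (uu K α β) * Polynomial.X →
      φ x = Polynomial.C x * Polynomial.X ^ (n + 1)) :
    ∀ y, (1 + x) * y = 0 → y = 0 := by
  intro y hy
  obtain ⟨φ, h1, h2, h3⟩ := exists_grading K α β
  apply h3
  apply regular_aux x n
  rw [← hx φ h1 h2, ← map_one φ, ← map_add, ← map_mul, hy, map_zero]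

theorem grade_om {μ : K} (φ : DownUp K α β 0 →ₐ[K] Polynomial (DownUp K α β 0))
    (h1 : φ (dd K α β) = Polynomial.C (dd K α β) * Polynomial.X)
    (h2 : φ (uu K α β) = Polynomial.C (uu K α β) * Polynomial.X) :
    φ (om K α β μ) = Polynomial.C (om K α β μ) * Polynomial.X ^ 2 := by
  rw [Polynomial.C_mul_X_pow_eq_monomial]
  unfold om
  rw [map_sub φ, map_smul φ, map_mul φ, map_mul φ, h1, h2]
  simp only [Polynomial.C_mul_X_eq_monomial, Polynomial.monomial_mul_monomial, ← map_sub,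
    Polynomial.smul_monomial]

theorem rep_om {S : Type} [CommRing S] [Algebra K S] [MulSemiringAction G S]
    [SMulCommClass G K S] {μ : K} {u : S} (ρ : DownUp K α β 0 →ₐ[K] SkewMonoidAlgebra S G)
    (h1 : ρ (dd K α β) = single t 1) (h2 : ρ (uu K α β) = single t⁻¹ u) :
    ρ (om K α β μ) = single 1 (t • u - μ • u) := by
  unfold om
  simp only [map_sub, map_smul, map_mul ρ, h1, h2, single_mul_single, smul_single]
  simp [sub_eq_add_neg, single_add, single_neg]

theorem case1 {S : Type} [CommRing S] [IsDomain S] [Algebra K S] [MulSemiringAction G S]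
    [SMulCommClass G K S] {lam μ : K} (hsum : lam + μ = α) (hprod : lam * μ = -β)
    (hl : lam ≠ 1) (u : S) (h : t • t • u = α • t • u + β • u)
    (s0n : 1 + (t • u - μ • u) ≠ 0) (hu : ¬ IsUnit (1 + (t • u - μ • u))) :
    ∃ I : Submodule (DownUp K α β 0)ᵐᵒᵖ (DownUp K α β 0),
      IsStablyFreeRight (DownUp K α β 0) I ∧ ¬ Module.Free (DownUp K α β 0)ᵐᵒᵖ I := by
  have hb : β = - (lam * μ) := by rw [hprod, neg_neg]
  obtain ⟨ρ, hρ1, hρ2⟩ := exists_rep u h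
  have hd := d_om (K := K) hsum hprod
  have hom := rep_om (μ := μ) ρ hρ1 hρ2
  have hl' : lam - 1 ≠ 0 := sub_ne_zero.2 hl
  have hr : ∀ k : K, dd K α β * (1 + k • om K α β μ) =
      (1 + (k * lam) • om K α β μ) * dd K α β := by
    intro k
    rw [mul_add, add_mul, mul_smul_comm, hd, smul_mul_assoc, smul_smul, mul_one, one_mul]
  refine main_aux (1 + om K α β μ) (1 + lam • om K α β μ) (1 + (lam * lam) • om K α β μ)
    (1 + (lam * lam * lam) • om K α β μ) ((lam / (lam - 1)) • 1) ((-1 / (lam - 1)) • 1)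
    (lam + 1) lam ?_ (hr _) (hr _) ?_ ?_ ?_ ?_ ρ hρ1 _ ?_ ?_ s0n hu
  · simpa using hr 1
  · module
  · rw [mul_smul_comm, mul_smul_comm, mul_one, mul_one]
    match_scalars <;> field_simp <;> ring
  · simp only [add_mul, mul_add, one_mul, mul_one, smul_mul_assoc, mul_smul_comm, smul_add]
    abel
  · apply regular (n := 1)
    intro φ h1 h2
    rw [map_smul, grade_om φ h1 h2, ← Polynomial.smul_C, smul_mul_assoc]
  · rw [map_add, map_one, hom, single_add, one_def]
  · rw [map_add, map_one, map_smul, hom, one_def, smul_single, ← single_add, smul_add, smul_one,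
      smul_sub t, h, smul_comm t μ, smul_aux hsum hprod]

theorem case2 {S : Type} [CommRing S] [IsDomain S] [Algebra K S] [MulSemiringAction G S]
    [SMulCommClass G K S] (hsum : (1 : K) + 1 = α) (hprod : (1 : K) * 1 = -β)
    (u : S) (h : t • t • u = α • t • u + β • u)
    (s0n : 1 + (t • u - u) * u ≠ 0) (hu : ¬ IsUnit (1 + (t • u - u) * u)) :
    ∃ I : Submodule (DownUp K α β 0)ᵐᵒᵖ (DownUp K α β 0),
      IsStablyFreeRight (DownUp K α β 0) I ∧ ¬ Module.Free (DownUp K α β 0)ᵐᵒᵖ I := by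
  have hb : β = - 1 := by rw [mul_one] at hprod; rw [hprod, neg_neg]
  obtain ⟨ρ, hρ1, hρ2⟩ := exists_rep u h
  have hd := d_om (K := K) hsum hprod
  have hv := om_u (K := K) hsum hprod
  have hom := rep_om (μ := 1) ρ hρ1 hρ2
  have homdef : dd K α β * uu K α β = om K α β 1 + uu K α β * dd K α β := by
    simp [om]
  have hgr := fun φ h1 h2 => grade_om (K := K) (α := α) (β := β) (μ := 1) φ h1 h2
  rw [one_smul] at hd hv hom
  set w := om K α β 1 with hw
  set d := dd K α β with hdd
  set U := uu K α β with hUU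
  have hc : w * (U * d) = (U * d) * w := by
    rw [← mul_assoc, hv, mul_assoc, ← hd, mul_assoc]
  have hdv : d * (U * d) = (U * d + w) * d := by
    rw [← mul_assoc, homdef, add_comm]
  have hvd : ρ (U * d) = single 1 u := by
    rw [map_mul, hρ1, hρ2]; simp
  have hr : ∀ k : ℕ, d * (1 + w * (U * d + k * w)) =
      (1 + w * (U * d + (k + 1 : ℕ) * w)) * d := by
    intro k
    have : (k : DownUp K α β 0) * w * d = d * (k * w) := by
      rw [mul_assoc, ← hd, (Nat.cast_commute k d).left_comm]
    calc _ = d + (d * w) * (U * d + k * w) := by simp only [mul_add, mul_one, mul_assoc]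
      _ = d + w * (d * (U * d) + d * (k * w)) := by rw [hd, mul_assoc, mul_add d]
      _ = d + w * ((U * d + w) * d + k * w * d) := by rw [hdv, this]
      _ = _ := by
        push_cast
        simp only [mul_add, mul_one, add_mul, one_mul, mul_assoc]
        abel
  generalize hv' : U * d = v at *
  refine main_aux (1 + w * v) (1 + w * (v + w)) (1 + w * (v + (2 : ℕ) * w))
    (1 + w * (v + (3 : ℕ) * w)) (1 - w * v - v * v) (v * v)
    2 1 ?_ ?_ (hr 2) ?_ ?_ ?_ ?_ ρ hρ1 (1 + (t • u - u) * u) ?_ ?_ s0n hu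
  · simpa using hr 0
  · simpa using hr 1
  · simp only [two_smul, one_smul]
    push_cast
    noncomm_ring
  · have e1 : w * (w * (v * v)) = w * v * (w * v) := by
      rw [mul_assoc w v (w * v), ← mul_assoc v w v, ← hc, mul_assoc]
    calc _ = 1 + (w * (w * (v * v)) - w * v * (w * v)) := by
          simp only [add_mul, mul_add, mul_sub, one_mul, mul_one, mul_assoc]
          abel
      _ = 1 := by rw [e1]; simp
  · have : Commute w v := hc
    have c1 : Commute (w * v) (w * (v + w)) := by
      apply Commute.mul_left
      · exact (Commute.refl w).mul_right (this.add_right (Commute.refl w))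
      · exact this.symm.mul_right ((Commute.refl v).add_right this.symm)
    exact ((Commute.one_left _).add_left ((Commute.one_right _).add_right c1)).eq
  · apply regular (n := 3)
    intro φ h1 h2
    have e := hgr φ h1 h2
    have e2 : φ v = Polynomial.C v * Polynomial.X ^ 2 := by
      rw [← hv', map_mul, h1, h2]
      simp only [Polynomial.C_mul_X_eq_monomial, Polynomial.C_mul_X_pow_eq_monomial,
        Polynomial.monomial_mul_monomial]
      rfl
    rw [map_mul, map_add, e, e2]
    simp only [Polynomial.C_mul_X_pow_eq_monomial, ← map_add,
        Polynomial.monomial_mul_monomial]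
  · rw [map_add, map_one, map_mul, hom, hvd, single_add, one_def]; simp
  · have e : 1 + (t • u - u) * (u + (t • u - u)) = t • (1 + (t • u - u) * u) := by
      rw [smul_add, smul_one, smul_mul', smul_sub, h, ← hsum, hb]
      simp only [neg_smul, add_smul, one_smul]
      ring
    rw [← e, map_add, map_one, map_mul, map_add, hom, hvd, one_def, ← single_add,
      single_mul_single, one_smul, mul_one, ← single_add]

end DUAux

open SkewL MvPolynomial in
/-- For `char K = 0`, `β ≠ 0` and both roots `λ, μ` of `t² − αt − β` in `K`,
the down-up algebra `A = A(α,β,0)` has a right ideal that is stably free but not free as a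
right `A`-module. -/
theorem downUp_gamma_zero_has_nontrivial_stablyFree_right_ideal
    (K : Type) [Field K] [CharZero K] (α β lam μ : K) (hβ : β ≠ 0)
    (hsum : lam + μ = α) (hprod : lam * μ = -β) :
    ∃ I : Submodule (DownUp K α β 0)ᵐᵒᵖ (DownUp K α β 0),
      IsStablyFreeRight (DownUp K α β 0) I ∧ ¬ Module.Free (DownUp K α β 0)ᵐᵒᵖ I := by
  obtain ⟨σ, h0, h1⟩ := DUAux.exists_action K α β hβ
  letI act : MulSemiringAction G (MvPolynomial (Fin 2) K) :=
    MulSemiringAction.compHom _ (zpowersHom (MvPolynomial (Fin 2) K ≃ₐ[K] MvPolynomial (Fin 2) K) σ)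
  have hact : ∀ (g : G) x, g • x = (zpowersHom _ σ g) x := fun _ _ => rfl
  have ht : ∀ x : MvPolynomial (Fin 2) K, t • x = σ x := by
    intro x
    rw [hact]
    simp [t]
  haveI : SMulCommClass G K (MvPolynomial (Fin 2) K) :=
    ⟨fun g k x => by rw [hact, hact, map_smul]⟩
  have hX : t • t • (X 0 : MvPolynomial (Fin 2) K) = α • t • X 0 + β • X 0 := by
    rw [ht, ht, h0, h1]
  have hcase1 : ∀ lam μ : K, lam + μ = α → lam * μ = -β → lam ≠ 1 →
      ∃ I : Submodule (DownUp K α β 0)ᵐᵒᵖ (DownUp K α β 0),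
      IsStablyFreeRight (DownUp K α β 0) I ∧ ¬ Module.Free (DownUp K α β 0)ᵐᵒᵖ I := by
    intro lam μ hs hp hl
    refine DUAux.case1 hs hp hl (X 0 : MvPolynomial (Fin 2) K) hX ?_ ?_
    · intro h
      have := congrArg (MvPolynomial.eval (![0, 0] : Fin 2 → K)) h
      simp [ht, h0, smul_eval] at this
    · intro h
      have := h.map (MvPolynomial.eval (![0, -1] : Fin 2 → K))
      simp [ht, h0, smul_eval] at this
  by_cases hl : lam = 1
  · by_cases hm : μ = 1
    · subst hl hm
      refine DUAux.case2 hsum hprod (X 0 : MvPolynomial (Fin 2) K) hX ?_ ?_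
      · intro h
        have := congrArg (MvPolynomial.eval (![0, 0] : Fin 2 → K)) h
        simp [ht, h0] at this
      · intro h
        have := h.map (MvPolynomial.eval (![1, 0] : Fin 2 → K))
        simp [ht, h0] at this
    · exact hcase1 μ lam (by rw [add_comm, hsum]) (by rw [mul_comm, hprod]) hm
  · exact hcase1 lam μ hsum hprod hl
end
end
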